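/- Let V be a finite vertex set, let T ≥ 1 be an integer, let w be a weight function on V whose finite values all lie in {0, 1, …, 2^T − 1}, let s ∈ V, and suppose d_w(s,v) < ∞ for every v ∈ V. For 0 ≤ i ≤ T define w_i(u,v) = ⌊w(u,v)/2^{T−i}⌋ on edges (the integer formed by the i most significant bits of the T-bit representation of w(u,v)), so that w_0 ≡ 0 and w_T = w. Define d̃_0(v) = 0 for all v ∈ V, and for 1 ≤ i ≤ T define ℓ_i(u,v) = 2·d̃_{i−1}(u) + w_i(u,v) − 2·d̃_{i−1}(v) on edges and d̃_i(v) = 2·d̃_{i−1}(v) + d_{ℓ_i}(s,v). Then for every 0 ≤ i ≤ T and every v ∈ V, d̃_i(v) = d_{w_i}(s,v); in particular d̃_T(v) = d_w(s,v) for every v ∈ V. -/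

import Mathlib

/-!
The function `2 d_{w_{i-1}}(s, ·)` is a feasible potential for `w_i`: on an edge
`w_i(u,v) ≥ 2 w_{i-1}(u,v)`, so the triangle inequality for `d_{w_{i-1}}`
(`dist_le_add`) gives `2 d(v) ≤ 2 d(u) + w_i(u,v)`. Hence `ℓ_i` is an honest (untruncated) reduced
weight, the `ℓ_i`-length of a path telescopes (`walkLen_potential`), and since the potential vanishes
at `s`, `d_{ℓ_i}(s,v) + 2 d(v) = d_{w_i}(s,v)` (`dist_potential`). The recurrence thus computes
`d_{w_i}` by induction on `i`; at `i = 0` all edges have weight zero, because all weights are below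
`2 ^ T`. All the weights `w_i` have the same edges as `w`, which makes every distance finite.
-/


open scoped ENNReal ENat

namespace Paper

variable {V : Type*} {α : Type*}

/-- The length of a walk `l` (a list of vertices) under weight `w`:
the sum of the weights of consecutive pairs. -/
def walkLen [AddCommMonoid α] (w : V → V → α) (l : List V) : α :=
  ((l.zip l.tail).map fun p => w p.1 p.2).sum

/-- `l` is a path from `s` to `t` in the weighted digraph `w`: nonempty,
starts at `s`, ends at `t`, and every consecutive pair is an edge (finite weight). -/
def IsPathFrom [AddCommMonoid α] [CompleteLattice α]
    (w : V → V → α) (s t : V) (l : List V) : Prop :=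
  l ≠ [] ∧ l.head? = some s ∧ l.getLast? = some t ∧ l.Chain' (fun u v => w u v ≠ ⊤)

/-- The distance from `s` to `t`: the infimum of lengths of paths from `s` to `t`
(`⊤` if there is no path). -/
noncomputable def dist [AddCommMonoid α] [CompleteLattice α]
    (w : V → V → α) (s t : V) : α :=
  sInf {x | ∃ l, IsPathFrom w s t l ∧ walkLen w l = x}

/-- The `h`-hop distance from `s` to `t`: the infimum of lengths of paths
from `s` to `t` with at most `h` hops. -/
noncomputable def hdist [AddCommMonoid α] [CompleteLattice α]
    (h : ℕ) (w : V → V → α) (s t : V) : α :=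
  sInf {x | ∃ l, IsPathFrom w s t l ∧ l.length ≤ h + 1 ∧ walkLen w l = x}

theorem walkLen_cons_cons (w : V → V → ℕ∞) (a b : V) (l : List V) :
    walkLen w (a :: b :: l) = w a b + walkLen w (b :: l) := by
  simp [walkLen]

theorem walkLen_singleton (w : V → V → ℕ∞) (a : V) : walkLen w [a] = 0 := by
  simp [walkLen]

theorem isPathFrom_singleton (w : V → V → ℕ∞) (s : V) : IsPathFrom w s s [s] := by
  exact ⟨by simp, rfl, rfl, List.isChain_singleton s⟩

theorem IsPathFrom.congr {a b : V → V → ℕ∞} (h : ∀ u v, a u v = ⊤ ↔ b u v = ⊤) {s t : V}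
    {l : List V} (hl : IsPathFrom a s t l) : IsPathFrom b s t l := by
  obtain ⟨h1, h2, h3, h4⟩ := hl
  refine ⟨h1, h2, h3, ?_⟩
  have : (fun u v => b u v ≠ ⊤) = fun u v => a u v ≠ ⊤ := by
    funext u v; simp [h]
  rw [this]; exact h4

theorem dist_le_walkLen {w : V → V → ℕ∞} {s t : V} {l : List V} (hl : IsPathFrom w s t l) :
    dist w s t ≤ walkLen w l :=
  sInf_le ⟨l, hl, rfl⟩

/-- A finite distance is attained, because `ℕ∞` is well-ordered. -/
theorem exists_path_of_dist_ne_top {w : V → V → ℕ∞} {s t : V} (h : dist w s t ≠ ⊤) :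
    ∃ l, IsPathFrom w s t l ∧ walkLen w l = dist w s t := by
  have hne : {x | ∃ l, IsPathFrom w s t l ∧ walkLen w l = x}.Nonempty := by
    by_contra hc
    rw [Set.not_nonempty_iff_eq_empty] at hc
    exact h (by rw [dist, hc, sInf_empty])
  exact csInf_mem hne

theorem walkLen_ne_top {w : V → V → ℕ∞} (l : List V)
    (h : l.IsChain (fun u v => w u v ≠ ⊤)) : walkLen w l ≠ ⊤ := by
  induction l with
  | nil => simp [walkLen]
  | cons a l ih =>
    cases l with
    | nil => simp [walkLen]
    | cons b l =>
      rw [List.isChain_cons_cons] at h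
      rw [walkLen_cons_cons]
      exact WithTop.add_ne_top.2 ⟨h.1, ih h.2⟩

theorem dist_ne_top_congr {a b : V → V → ℕ∞} (h : ∀ u v, a u v = ⊤ ↔ b u v = ⊤) {s t : V}
    (ha : dist a s t ≠ ⊤) : dist b s t ≠ ⊤ := by
  obtain ⟨l, hl, -⟩ := exists_path_of_dist_ne_top ha
  have hb := hl.congr h
  exact ne_top_of_le_ne_top (walkLen_ne_top l hb.2.2.2) (dist_le_walkLen hb)

theorem dist_self_eq_zero (w : V → V → ℕ∞) (s : V) : dist w s s = 0 :=
  le_antisymm ((dist_le_walkLen (isPathFrom_singleton w s)).trans_eq (walkLen_singleton w s))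
    zero_le

theorem walkLen_concat (w : V → V → ℕ∞) (l : List V) (u v : V) (h : l.getLast? = some u) :
    walkLen w (l ++ [v]) = walkLen w l + w u v := by
  induction l with
  | nil => simp at h
  | cons a l ih =>
    cases l with
    | nil =>
      obtain rfl : a = u := by simpa using h
      simp [walkLen]
    | cons b l =>
      have := ih (by simpa using h)
      simp only [List.cons_append, walkLen_cons_cons] at this ⊢
      rw [this, add_assoc]

/-- The triangle inequality along a single edge. -/
theorem dist_le_add (w : V → V → ℕ∞) (s u v : V) : dist w s v ≤ dist w s u + w u v := by
  by_cases hu : dist w s u = ⊤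
  · simp [hu]
  by_cases hw : w u v = ⊤
  · simp [hw]
  obtain ⟨l, ⟨h1, h2, h3, h4⟩, hlen⟩ := exists_path_of_dist_ne_top hu
  rw [← hlen, ← walkLen_concat w l u v h3]
  refine dist_le_walkLen ⟨by simp, ?_, by simp, ?_⟩
  · simp [List.head?_append, h2]
  · refine List.IsChain.append h4 (by simp) ?_
    intro x hx y hy
    rw [h3] at hx
    simp only [Option.mem_def, Option.some.injEq, List.head?_cons] at hx hy
    subst hx hy
    exact hw

/-- Path lengths under weights that differ by a potential `p` telescope. -/
theorem walkLen_potential {a b : V → V → ℕ∞} {p : V → ℕ}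
    (h : ∀ u v, a u v + p v = p u + b u v) {t : V} (l : List V) :
    ∀ s, l.head? = some s → l.getLast? = some t →
      walkLen a l + p t = p s + walkLen b l := by
  induction l with
  | nil => simp
  | cons x l ih =>
    intro s hs ht
    obtain rfl : x = s := by simpa using hs
    cases l with
    | nil =>
      obtain rfl : x = t := by simpa using ht
      simp [walkLen]
    | cons y l =>
      have h2 := ih y (by simp) (by simpa using ht)
      rw [walkLen_cons_cons, walkLen_cons_cons, add_assoc, h2, ← add_assoc, h, add_assoc]

/-- Reducing weights by a potential that vanishes at the source shifts distances by it. -/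
theorem dist_potential {a b : V → V → ℕ∞} {p : V → ℕ}
    (h : ∀ u v, a u v + p v = p u + b u v) {s : V} (hs : p s = 0) (t : V)
    (hb : dist b s t ≠ ⊤) :
    dist a s t + p t = dist b s t := by
  have htop : ∀ u v, a u v = ⊤ ↔ b u v = ⊤ := by
    intro u v
    have := congrArg (· = ⊤) (h u v)
    simpa [WithTop.add_eq_top] using this
  have key : ∀ l, IsPathFrom a s t l → walkLen a l + p t = walkLen b l := by
    intro l hl
    simpa [hs] using walkLen_potential h l s hl.2.1 hl.2.2.1
  apply le_antisymm
  · obtain ⟨l, hl, hlen⟩ := exists_path_of_dist_ne_top hb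
    have hla := hl.congr fun u v => (htop u v).symm
    rw [← hlen, ← key l hla]
    gcongr
    exact dist_le_walkLen hla
  · obtain ⟨l, hl, hlen⟩ :=
      exists_path_of_dist_ne_top (dist_ne_top_congr (fun u v => (htop u v).symm) hb)
    rw [← hlen, key l hl]
    exact dist_le_walkLen (hl.congr htop)

theorem walkLen_eq_zero {w : V → V → ℕ∞} (l : List V)
    (h : l.IsChain (fun u v => w u v = 0)) : walkLen w l = 0 := by
  induction l with
  | nil => simp [walkLen]
  | cons a l ih =>
    cases l with
    | nil => simp [walkLen]
    | cons b l =>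
      rw [List.isChain_cons_cons] at h
      rw [walkLen_cons_cons, h.1, ih h.2, add_zero]

/-- The scaling framework. With `w_i(u,v) = ⌊w(u,v)/2^{T−i}⌋` on edges,
`d̃_0 ≡ 0`, `ℓ_i(u,v) = 2·d̃_{i−1}(u) + w_i(u,v) − 2·d̃_{i−1}(v)` on edges, and
`d̃_i(v) = 2·d̃_{i−1}(v) + d_{ℓ_i}(s,v)`, one has `d̃_i(v) = d_{w_i}(s,v)` for all
`0 ≤ i ≤ T` and all `v`; in particular `d̃_T(v) = d_w(s,v)`. -/
theorem statement4 {V : Type*} [Fintype V]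
    (T : ℕ) (hT : 1 ≤ T)
    (w : V → V → ℕ∞) (s : V)
    (hw : ∀ u v : V, w u v ≠ ⊤ → (w u v).toNat < 2 ^ T)
    (hfin : ∀ v : V, dist w s v ≠ ⊤)
    (wi : ℕ → V → V → ℕ∞)
    (hwi : ∀ i : ℕ, i ≤ T → ∀ u v : V, wi i u v =
      if w u v = ⊤ then ⊤ else (((w u v).toNat / 2 ^ (T - i) : ℕ) : ℕ∞))
    (dtil : ℕ → V → ℕ∞)
    (h0 : ∀ v : V, dtil 0 v = 0)
    (ell : ℕ → V → V → ℕ∞)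
    (hell : ∀ i : ℕ, 1 ≤ i → i ≤ T → ∀ u v : V, ell i u v =
      if w u v = ⊤ then ⊤ else
        ((2 * (dtil (i-1) u).toNat + (wi i u v).toNat - 2 * (dtil (i-1) v).toNat : ℕ) : ℕ∞))
    (hrec : ∀ i : ℕ, 1 ≤ i → i ≤ T → ∀ v : V,
      dtil i v = 2 * dtil (i-1) v + dist (ell i) s v) :
    (∀ i ≤ T, ∀ v : V, dtil i v = dist (wi i) s v) ∧
    (∀ v : V, dtil T v = dist w s v) := by
  have htop : ∀ i ≤ T, ∀ u v, w u v = ⊤ ↔ wi i u v = ⊤ := by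
    intro i hi u v
    rw [hwi i hi]
    split_ifs with h <;> simp [h]
  have hne : ∀ i ≤ T, ∀ v, dist (wi i) s v ≠ ⊤ := fun i hi v =>
    dist_ne_top_congr (htop i hi) (hfin v)
  have main : ∀ i ≤ T, ∀ v : V, dtil i v = dist (wi i) s v := by
    intro i
    induction i with
    | zero =>
      intro _ v
      rw [h0]
      obtain ⟨l, hl, hlen⟩ := exists_path_of_dist_ne_top (hne 0 (Nat.zero_le _) v)
      rw [← hlen]
      refine (walkLen_eq_zero l (List.IsChain.imp ?_ hl.2.2.2)).symm
      intro x y hxy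
      have hxy' : w x y ≠ ⊤ := fun hc => hxy ((htop 0 (Nat.zero_le _) x y).1 hc)
      rw [hwi 0 (Nat.zero_le _), if_neg hxy', Nat.sub_zero, Nat.div_eq_of_lt (hw x y hxy')]
      rfl
    | succ i ih =>
      intro hi v
      have hi' : i ≤ T := by omega
      have ih := ih hi'
      obtain ⟨d, hd⟩ : ∃ d : V → ℕ, ∀ v, dtil i v = d v :=
        ⟨fun v => (dtil i v).toNat, fun v =>
          (ENat.natCast_toNat (by rw [ih]; exact hne i hi' v)).symm⟩
      have hds : d s = 0 := by
        have := hd s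
        rw [ih, dist_self_eq_zero] at this
        exact_mod_cast this.symm
      have hpot : ∀ u v, ell (i + 1) u v + ((2 * d v : ℕ) : ℕ∞)
          = ((2 * d u : ℕ) : ℕ∞) + wi (i + 1) u v := by
        intro u v
        have htri := dist_le_add (wi i) s u v
        rw [← ih, ← ih, hd, hd, hwi i hi'] at htri
        rw [hell (i + 1) (by omega) hi, hwi (i + 1) hi, Nat.add_sub_cancel, hd, hd]
        by_cases hwt : w u v = ⊤
        · simp [hwt]
        rw [if_neg hwt] at htri
        simp only [if_neg hwt, ENat.toNat_natCast]
        norm_cast at htri ⊢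
        -- Dropping one more bit halves the weight, rounding down.
        have hbit : (w u v).toNat / 2 ^ (T - i)
            = (w u v).toNat / 2 ^ (T - (i + 1)) / 2 := by
          rw [Nat.div_div_eq_div_mul, ← pow_succ]
          congr 2
          omega
        omega
      have := dist_potential hpot (by simp [hds]) v (hne (i + 1) hi v)
      rw [hrec (i + 1) (by omega) hi, Nat.add_sub_cancel, ← this, hd, add_comm]
      push_cast
      rfl
  refine ⟨main, fun v => ?_⟩
  have hT' : wi T = w := by
    funext u v
    rw [hwi T le_rfl]
    split_ifs with h
    · exact h.symm
    · simp [ENat.natCast_toNat h]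
  rw [main T le_rfl, hT']

end Paper
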